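/- Let B be a complex unital Banach algebra with submultiplicative norm, let A ∈ B be invertible, and let X₀ ∈ B commute with A. Set Y₀ = 1 − A⁻¹X₀² and assume ‖Y₀‖ < 1. Define the sequences Xₖ₊₁ = Xₖ(1 + (1/2)Yₖ) and Yₖ₊₁ = Yₖ²((3/4)·1 + (1/4)Yₖ). Then (Xₖ) converges to a limit L ∈ B satisfying L² = A and LA = AL. -/

import Mathlib

/-!
Since `1 - (1 - y) * (1 + y / 2) ^ 2 = y ^ 2 * (3 / 4 + y / 4)`, the relation
`Yₖ = 1 - A⁻¹ * Xₖ ^ 2` persists along the iteration. The coefficients `3 / 4` and `1 / 4` are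
nonnegative with sum `1`, so `‖Y₀‖ < 1` makes the residuals `Yₖ` decay quadratically. The increments
`Xₖ₊₁ - Xₖ = Xₖ * (Yₖ / 2)` are multiplied at each step by a polynomial in `Yₖ` without constant
term, hence by a factor tending to zero; they are therefore summable and `X` converges. In the limit
the residual vanishes, that is, `A⁻¹ * L ^ 2 = 1`.
-/

open Filter Topology

lemma summable_of_succ_eq_mul_of_tendsto_zero {R : Type*} [SeminormedRing R] [CompleteSpace R]
    {a r : ℕ → R} (h : ∀ k, a (k + 1) = a k * r k) (hr : Tendsto r atTop (𝓝 0)) :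
    Summable a := by
  have hr_small : ∀ᶠ k in atTop, ‖r k‖ ≤ 1 / 2 :=
    (tendsto_zero_iff_norm_tendsto_zero.mp hr).eventually_le_const (by norm_num)
  refine summable_of_ratio_norm_eventually_le (r := 1 / 2) (by norm_num) ?_
  filter_upwards [hr_small] with k hk
  calc ‖a (k + 1)‖ ≤ ‖a k‖ * ‖r k‖ := h k ▸ norm_mul_le _ _
    _ ≤ ‖a k‖ * (1 / 2) := by gcongr
    _ = 1 / 2 * ‖a k‖ := mul_comm _ _

lemma exists_tendsto_of_summable_succ_sub {G : Type*} [AddCommGroup G] [TopologicalSpace G]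
    [ContinuousAdd G] {x : ℕ → G} (h : Summable fun k => x (k + 1) - x k) :
    ∃ l, Tendsto x atTop (𝓝 l) := by
  refine ⟨x 0 + ∑' k, (x (k + 1) - x k), ?_⟩
  simpa only [Finset.sum_range_sub, add_sub_cancel] using
    h.hasSum.tendsto_sum_nat.const_add (x 0)

lemma one_sub_one_sub_mul_one_add_half_smul_sq {𝕜 B : Type*} [Field 𝕜] [NeZero (2 : 𝕜)]
    [Ring B] [Algebra 𝕜 B] (y : B) :
    1 - (1 - y) * (1 + (1 / 2 : 𝕜) • y) ^ 2 =
      y ^ 2 * ((3 / 4 : 𝕜) • (1 : B) + (1 / 4 : 𝕜) • y) := by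
  have h4 : (4 : 𝕜) = 2 * 2 := by norm_num
  simp only [pow_two, mul_add, add_mul, sub_mul, mul_one, one_mul, mul_smul_comm,
    smul_mul_assoc, mul_assoc, h4]
  match_scalars <;> field_simp <;> ring

lemma norm_sq_mul_three_quarters_add_quarter_smul_le {𝕜 B : Type*} [RCLike 𝕜] [SeminormedRing B]
    [NormedAlgebra 𝕜 B] {y : B} (hy : ‖y‖ ≤ 1) :
    ‖y ^ 2 * ((3 / 4 : 𝕜) • (1 : B) + (1 / 4 : 𝕜) • y)‖ ≤ ‖y‖ ^ 2 := by
  have h34 : ‖(3 / 4 : 𝕜)‖ = 3 / 4 := by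
    rw [norm_div, RCLike.norm_ofNat, RCLike.norm_ofNat]
  have h14 : ‖(1 / 4 : 𝕜)‖ = 1 / 4 := by
    rw [norm_div, norm_one, RCLike.norm_ofNat]
  -- Expanding first keeps `‖1‖`, which may exceed `1`, out of the estimate.
  calc ‖y ^ 2 * ((3 / 4 : 𝕜) • (1 : B) + (1 / 4 : 𝕜) • y)‖
      = ‖(3 / 4 : 𝕜) • y ^ 2 + (1 / 4 : 𝕜) • y ^ 3‖ := by
        rw [mul_add, mul_smul_comm, mul_smul_comm, mul_one, ← pow_succ]
    _ ≤ 3 / 4 * ‖y ^ 2‖ + 1 / 4 * ‖y ^ 3‖ := by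
        refine (norm_add_le _ _).trans_eq ?_
        rw [norm_smul, norm_smul, h34, h14]
    _ ≤ 3 / 4 * ‖y‖ ^ 2 + 1 / 4 * ‖y‖ ^ 3 := by
        gcongr <;> exact norm_pow_le' y (by norm_num)
    _ ≤ 3 / 4 * ‖y‖ ^ 2 + 1 / 4 * ‖y‖ ^ 2 := by
        gcongr 3 / 4 * ‖y‖ ^ 2 + 1 / 4 * ?_
        exact pow_le_pow_of_le_one (norm_nonneg y) hy (by norm_num)
    _ = ‖y‖ ^ 2 := by ring

/-- The recursion of the SIAI iteration, with iterates `X` and residuals `Y`. The relation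
`Y 0 = 1 - A⁻¹ * X 0 ^ 2`, which ties it to the element `A` whose root is sought, is not
included. -/
structure IsSIAI (𝕜 : Type*) {B : Type*} [Field 𝕜] [Ring B] [Algebra 𝕜 B] (X Y : ℕ → B) :
    Prop where
  iterate_succ : ∀ k, X (k + 1) = X k * (1 + (1 / 2 : 𝕜) • Y k)
  residual_succ : ∀ k, Y (k + 1) = (Y k) ^ 2 * ((3 / 4 : 𝕜) • (1 : B) + (1 / 4 : 𝕜) • Y k)

namespace IsSIAI

section Algebra

variable {𝕜 B : Type*} [Field 𝕜] [Ring B] [Algebra 𝕜 B] {X Y : ℕ → B}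

lemma commute_residual (h : IsSIAI 𝕜 X Y) {z : B} (hz : Commute z (Y 0)) (k : ℕ) :
    Commute z (Y k) := by
  induction k with
  | zero => exact hz
  | succ k ih =>
    rw [h.residual_succ]
    exact (ih.pow_right 2).mul_right
      (((Commute.one_right z).smul_right _).add_right (ih.smul_right _))

lemma commute_iterate (h : IsSIAI 𝕜 X Y) {z : B} (hzX : Commute z (X 0))
    (hzY : Commute z (Y 0)) (k : ℕ) : Commute z (X k) := by
  induction k with
  | zero => exact hzX
  | succ k ih =>
    rw [h.iterate_succ]
    exact ih.mul_right
      ((Commute.one_right z).add_right ((h.commute_residual hzY k).smul_right _))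

lemma residual_eq_one_sub_mul_sq [NeZero (2 : 𝕜)] (h : IsSIAI 𝕜 X Y) {c : B}
    (hc : Commute c (X 0)) (hY0 : Y 0 = 1 - c * X 0 ^ 2) (k : ℕ) :
    Y k = 1 - c * X k ^ 2 := by
  have hcY : Commute c (Y 0) :=
    hY0 ▸ (Commute.one_right c).sub_right ((Commute.refl c).mul_right (hc.pow_right 2))
  induction k with
  | zero => exact hY0
  | succ k ih =>
    have hXY : Commute (X k) (Y k) := by
      rw [ih]
      exact (Commute.one_right _).sub_right
        ((h.commute_iterate hc hcY k).symm.mul_right (Commute.self_pow _ 2))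
    have hXfactor : Commute (X k) (1 + (1 / 2 : 𝕜) • Y k) :=
      (Commute.one_right _).add_right (hXY.smul_right _)
    calc Y (k + 1) = 1 - (1 - Y k) * (1 + (1 / 2 : 𝕜) • Y k) ^ 2 := by
          rw [h.residual_succ, one_sub_one_sub_mul_one_add_half_smul_sq]
      _ = 1 - c * X k ^ 2 * (1 + (1 / 2 : 𝕜) • Y k) ^ 2 := by
          rw [show 1 - Y k = c * X k ^ 2 by rw [ih, sub_sub_cancel]]
      _ = 1 - c * X (k + 1) ^ 2 := by
          rw [h.iterate_succ, hXfactor.mul_pow, mul_assoc]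

lemma iterate_succ_sub (h : IsSIAI 𝕜 X Y) (k : ℕ) :
    X (k + 1) - X k = X k * ((1 / 2 : 𝕜) • Y k) := by
  rw [h.iterate_succ, mul_add, mul_one, add_sub_cancel_left]

lemma iterate_succ_sub_succ (h : IsSIAI 𝕜 X Y) (k : ℕ) :
    X (k + 1 + 1) - X (k + 1) = (X (k + 1) - X k) *
      ((1 + (1 / 2 : 𝕜) • Y k) * (Y k * ((3 / 4 : 𝕜) • (1 : B) + (1 / 4 : 𝕜) • Y k))) := by
  have hYfactor : Commute (1 + (1 / 2 : 𝕜) • Y k) (Y k) :=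
    (Commute.one_left _).add_left ((Commute.refl _).smul_left _)
  rw [h.iterate_succ_sub, h.iterate_succ_sub, h.iterate_succ, h.residual_succ, pow_two]
  simp only [mul_smul_comm, smul_mul_assoc, mul_assoc, hYfactor.left_comm]

end Algebra

section RCLike

variable {𝕜 B : Type*} [RCLike 𝕜] [SeminormedRing B] [NormedAlgebra 𝕜 B] {X Y : ℕ → B}

lemma norm_residual_le (h : IsSIAI 𝕜 X Y) (hY0 : ‖Y 0‖ ≤ 1) (k : ℕ) :
    ‖Y k‖ ≤ ‖Y 0‖ ^ 2 ^ k := by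
  induction k with
  | zero => simp
  | succ k ih =>
    have hYk : ‖Y k‖ ≤ 1 := ih.trans (pow_le_one₀ (norm_nonneg _) hY0)
    calc ‖Y (k + 1)‖ ≤ ‖Y k‖ ^ 2 := by
          rw [h.residual_succ]
          exact norm_sq_mul_three_quarters_add_quarter_smul_le hYk
      _ ≤ (‖Y 0‖ ^ 2 ^ k) ^ 2 := by gcongr
      _ = ‖Y 0‖ ^ 2 ^ (k + 1) := by rw [← pow_mul, ← pow_succ]

lemma tendsto_residual (h : IsSIAI 𝕜 X Y) (hY0 : ‖Y 0‖ < 1) : Tendsto Y atTop (𝓝 0) :=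
  squeeze_zero_norm (h.norm_residual_le hY0.le) <|
    (tendsto_pow_atTop_nhds_zero_of_lt_one (norm_nonneg _) hY0).comp
      (tendsto_pow_atTop_atTop_of_one_lt one_lt_two)

end RCLike

lemma exists_tendsto_iterate {𝕜 B : Type*} [NormedField 𝕜] [SeminormedRing B] [NormedAlgebra 𝕜 B]
    [CompleteSpace B] {X Y : ℕ → B} (h : IsSIAI 𝕜 X Y) (hY : Tendsto Y atTop (𝓝 0)) :
    ∃ L, Tendsto X atTop (𝓝 L) := by
  have hfactor : Tendsto (fun k => (1 + (1 / 2 : 𝕜) • Y k) *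
      (Y k * ((3 / 4 : 𝕜) • (1 : B) + (1 / 4 : 𝕜) • Y k))) atTop (𝓝 0) := by
    simpa only [zero_mul, mul_zero] using ((hY.const_smul (1 / 2 : 𝕜)).const_add 1).mul
      (hY.mul ((hY.const_smul (1 / 4 : 𝕜)).const_add ((3 / 4 : 𝕜) • (1 : B))))
  exact exists_tendsto_of_summable_succ_sub
    (summable_of_succ_eq_mul_of_tendsto_zero h.iterate_succ_sub_succ hfactor)

end IsSIAI

theorem siai_converges_to_square_root_general {𝕜 B : Type*} [NormedField 𝕜] [NeZero (2 : 𝕜)]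
    [NormedRing B] [NormedAlgebra 𝕜 B] [CompleteSpace B] (A : B) [Invertible A] {X Y : ℕ → B}
    (h : IsSIAI 𝕜 X Y) (hcomm : Commute A (X 0)) (hY0 : Y 0 = 1 - ⅟A * X 0 ^ 2)
    (hlim : Tendsto Y atTop (𝓝 0)) :
    ∃ L : B, Tendsto X atTop (𝓝 L) ∧ L ^ 2 = A ∧ Commute L A := by
  obtain ⟨L, hL⟩ := h.exists_tendsto_iterate hlim
  have hLres : Tendsto Y atTop (𝓝 (1 - ⅟A * L ^ 2)) := by
    simpa only [← h.residual_eq_one_sub_mul_sq hcomm.invOf_left hY0] using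
      ((hL.pow 2).const_mul (⅟A)).const_sub 1
  have hL_sq : ⅟A * L ^ 2 = 1 := (sub_eq_zero.mp (tendsto_nhds_unique hLres hlim)).symm
  have hAY : Commute A (Y 0) :=
    hY0 ▸ (Commute.one_right A).sub_right
      ((Commute.refl A).invOf_right.mul_right (hcomm.pow_right 2))
  have hAX : ∀ k, A * X k = X k * A := fun k => h.commute_iterate hcomm hAY k
  refine ⟨L, hL, ?_, ?_⟩
  · simpa only [mul_invOf_cancel_left, mul_one] using congrArg (A * ·) hL_sq
  · exact tendsto_nhds_unique (hL.mul_const A) ((hL.const_mul A).congr hAX)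

/-- Convergence of the SIAI iteration in a complex Banach algebra: starting from
`X₀` commuting with the invertible element `A` with residual `Y₀ = 1 - A⁻¹X₀²`
of norm less than one, the iterates `Xₖ₊₁ = Xₖ(1 + (1/2)Yₖ)`,
`Yₖ₊₁ = Yₖ²((3/4)·1 + (1/4)Yₖ)` converge to a square root of `A` commuting with `A`. -/
theorem siai_converges_to_square_root {B : Type*} [NormedRing B]
    [NormedAlgebra ℂ B] [CompleteSpace B]
    (A : B) [Invertible A] (X Y : ℕ → B)
    (hcomm : A * X 0 = X 0 * A)
    (hY0 : Y 0 = 1 - ⅟A * (X 0) ^ 2)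
    (hsmall : ‖Y 0‖ < 1)
    (hX : ∀ k, X (k + 1) = X k * (1 + (1/2 : ℂ) • Y k))
    (hY : ∀ k, Y (k + 1) = (Y k) ^ 2 * ((3/4 : ℂ) • (1 : B) + (1/4 : ℂ) • Y k)) :
    ∃ L : B, Filter.Tendsto X Filter.atTop (nhds L) ∧ L ^ 2 = A ∧ L * A = A * L := by
  have h : IsSIAI ℂ X Y := ⟨hX, hY⟩
  exact siai_converges_to_square_root_general A h hcomm hY0 (h.tendsto_residual hsmall)
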